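/- arXiv:1905.10119 — 9 statements merged into one kernel-verified Lean document; each statement's English description precedes it below -/
import Mathlib

section
/- Let C be a category with finite products and M a class of morphisms of C that contains all isomorphisms, is closed under composition, and is closed under binary products (if f, g ∈ M then f × g ∈ M). If X is an M-coextensive object of C, then every product projection p : X → A of X belongs to M, and moreover for every product projection p : X → A the unique morphism A → 1 to the terminal object belongs to M. -/
open CategoryTheory CategoryTheory.Limits

universe v u

variable {C : Type u} [Category.{v} C]

/-- `(p, q)` is a binary product diagram, exhibiting `X` as the product of `A` and `B`. -/
def IsBinaryProduct {X A B : C} (p : X ⟶ A) (q : X ⟶ B) : Prop :=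
  Nonempty (IsLimit (BinaryFan.mk p q))

/-- `p : X ⟶ A` is a product projection. -/
def IsProductProjection {X A : C} (p : X ⟶ A) : Prop :=
  ∃ (B : C) (q : X ⟶ B), IsBinaryProduct p q

/-- A pushout square whose two legs belong to the class `M`. -/
def IsMPushout (M : MorphismProperty C) {Z A B P : C}
    (f : Z ⟶ A) (g : Z ⟶ B) (a : A ⟶ P) (b : B ⟶ P) : Prop :=
  IsPushout f g a b ∧ M a ∧ M b

/-- `X` is an `M`-coextensive object. -/
structure MCoextensive (M : MorphismProperty C) (X : C) : Prop where
  pushout_exists : ∀ ⦃Y A : C⦄ (m : X ⟶ Y) (p : X ⟶ A), M m → IsProductProjection p →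
    ∃ (P : C) (a : A ⟶ P) (b : Y ⟶ P), IsMPushout M p m a b
  isBinaryProduct_iff : ∀ ⦃A₁ A₂ Y B₁ B₂ : C⦄ (π₁ : X ⟶ A₁) (π₂ : X ⟶ A₂)
    (f : X ⟶ Y) (p₁ : A₁ ⟶ B₁) (p₂ : A₂ ⟶ B₂) (π₁' : Y ⟶ B₁) (π₂' : Y ⟶ B₂),
    IsBinaryProduct π₁ π₂ → M f → M p₁ → M p₂ →
    π₁ ≫ p₁ = f ≫ π₁' → π₂ ≫ p₂ = f ≫ π₂' →
    (IsBinaryProduct π₁' π₂' ↔ (IsMPushout M π₁ f p₁ π₁' ∧ IsMPushout M π₂ f p₂ π₂'))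

/-- The class of product projections. -/
def projections (C : Type u) [Category.{v} C] : MorphismProperty C :=
  fun _ _ f => IsProductProjection f

/-- `X` is projection-coextensive. -/
def ProjectionCoextensive (X : C) : Prop := MCoextensive (projections C) X

/-- `f` is a regular epimorphism (a coequalizer of some parallel pair). -/
def IsRegularEpimorphism {X Y : C} (f : X ⟶ Y) : Prop :=
  ∃ (W : C) (a b : W ⟶ X) (h : a ≫ f = b ≫ f), Nonempty (IsColimit (Cofork.ofπ f h))

/-- The class of regular epimorphisms. -/
def regularEpis (C : Type u) [Category.{v} C] : MorphismProperty C :=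
  fun _ _ f => IsRegularEpimorphism f

/-- `X` is regularly-coextensive. -/
def RegularlyCoextensive (X : C) : Prop := MCoextensive (regularEpis C) X

/-- A regular category: finitely complete, coequalizers of kernel pairs, and
regular epimorphisms are stable under pullback. -/
class IsRegularCategory (C : Type u) [Category.{v} C] [HasFiniteLimits C] : Prop where
  hasCoequalizer_kernelPair : ∀ {X Y : C} (f : X ⟶ Y),
    HasCoequalizer (pullback.fst f f) (pullback.snd f f)
  regularEpi_stable : ∀ {X Y Z : C} (f : X ⟶ Y) (g : Z ⟶ Y),
    IsRegularEpimorphism f → IsRegularEpimorphism (pullback.snd f g)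

/-- `X` has global support: the unique morphism to the terminal object is a regular epi. -/
def HasGlobalSupport [HasTerminal C] (X : C) : Prop :=
  IsRegularEpimorphism (terminal.from X)

/-- Every product projection of an `M`-coextensive object is in `M`, and the terminal
morphism of any of its factors is in `M`. -/
theorem productProjection_mem_and_terminalFrom_mem
    {C : Type u} [Category.{v} C] [HasFiniteProducts C] (M : MorphismProperty C)
    (hiso : ∀ ⦃A B : C⦄ (f : A ⟶ B), IsIso f → M f)
    (hcomp : ∀ ⦃A B D : C⦄ (f : A ⟶ B) (g : B ⟶ D), M f → M g → M (f ≫ g))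
    (hprod : ∀ ⦃A B A' B' : C⦄ (f : A ⟶ B) (g : A' ⟶ B'), M f → M g → M (prod.map f g))
    (X : C) (hX : MCoextensive M X) :
    (∀ ⦃A : C⦄ (p : X ⟶ A), IsProductProjection p → M p) ∧
    (∀ ⦃A : C⦄ (p : X ⟶ A), IsProductProjection p → M (terminal.from A)) := by
  have hid : ∀ A : C, M (𝟙 A) := fun A => hiso _ inferInstance
  have h1 : ∀ ⦃A : C⦄ (p : X ⟶ A), IsProductProjection p → M p := by
    rintro A p ⟨B, q, h⟩
    exact ((hX.isBinaryProduct_iff p q (𝟙 X) (𝟙 A) (𝟙 B) p q h (hid _) (hid _) (hid _)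
      (by simp) (by simp)).1 h).1.2.2
  refine ⟨h1, ?_⟩
  intro A p hp
  have hMp := h1 p hp
  have hX1 : IsBinaryProduct (𝟙 X) (terminal.from X) :=
    ⟨BinaryFan.IsLimit.mk _ (fun f _ => f) (fun f g => by simp)
      (fun f g => terminal.hom_ext _ _) (fun f g m h _ => by simpa using h)⟩
  have hX1' : IsBinaryProduct (terminal.from X) (𝟙 X) :=
    ⟨BinaryFan.IsLimit.mk _ (fun _ g => g) (fun f g => terminal.hom_ext _ _)
      (fun f g => by simp) (fun f g m _ h => by simpa using h)⟩
  obtain ⟨T, t, s, hpo, ht, hs⟩ := hX.pushout_exists p (terminal.from X) hMp ⟨_, _, hX1'⟩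
  obtain ⟨hl⟩ : IsBinaryProduct (𝟙 A) s :=
    (hX.isBinaryProduct_iff (𝟙 X) (terminal.from X) p p t (𝟙 A) s hX1 hMp hMp ht
      (by simp) hpo.w).2
      ⟨⟨IsPushout.of_horiz_isIso ⟨by simp⟩, hMp, hid _⟩, hpo, ht, hs⟩
  -- any map from `A` to `T` equals `s`
  have huniq : ∀ g : A ⟶ T, g = s := by
    intro g
    obtain ⟨l, hl1, hl2⟩ := BinaryFan.IsLimit.lift' hl (𝟙 A) g
    simp only [BinaryFan.mk_fst, BinaryFan.mk_snd] at hl1 hl2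
    have : l = 𝟙 A := by simpa using hl1
    rw [← hl2, this]
    exact Category.id_comp s
  have he : terminal.from T ≫ t = 𝟙 T := by
    apply hpo.hom_ext
    · rw [← Category.assoc, terminal.hom_ext (t ≫ terminal.from T) (𝟙 _)]; simp
    · rw [huniq (s ≫ _), Category.comp_id]
  have hT : IsIso (terminal.from T) := ⟨t, he, terminal.hom_ext _ _⟩
  rw [terminal.hom_ext (terminal.from A) (s ≫ terminal.from T)]
  exact hcomp _ _ hs (hiso _ hT)
end

section
/- Let C be a category with finite products and M a class of morphisms of C that contains all isomorphisms, is closed under composition, and is closed under binary products. If X is an M-coextensive object of C, then X has co-disjoint products: every product projection of X is an epimorphism, and for every binary product diagram (π₁ : X → A, π₂ : X → B) a pushout of π₁ along π₂ exists whose vertex is a terminal object. -/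
open CategoryTheory CategoryTheory.Limits

universe v u

variable {C : Type u} [Category.{v} C]

theorem IsBinaryProduct.swap' {X A B : C} {p : X ⟶ A} {q : X ⟶ B}
    (h : IsBinaryProduct p q) : IsBinaryProduct q p :=
  ⟨BinaryFan.isLimitFlip h.some⟩

theorem isBinaryProduct_id_of_isTerminal {X T : C} (hT : IsTerminal T) (t : X ⟶ T) :
    IsBinaryProduct (𝟙 X) t :=
  ⟨BinaryFan.isLimitMk (fun s => s.fst) (fun s => Category.comp_id (Y := X) s.fst) (fun s => hT.hom_ext _ _)
    (fun s m h _ => (Category.comp_id (Y := X) m).symm.trans h)⟩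

/-- Product projections of an `M`-coextensive object are in `M`. -/
theorem MCoextensive.proj_mem {M : MorphismProperty C}
    (hiso : ∀ ⦃A B : C⦄ (f : A ⟶ B), IsIso f → M f)
    (hcomp : ∀ ⦃A B D : C⦄ (f : A ⟶ B) (g : B ⟶ D), M f → M g → M (f ≫ g))
    {X A : C} (hX : MCoextensive M X) (p : X ⟶ A) (hp : IsProductProjection p) : M p := by
  obtain ⟨P, a, b, hpo, ha, hb⟩ := hX.pushout_exists (𝟙 X) p (hiso _ inferInstance) hp
  have : IsIso a := hpo.isIso_inl_of_isIso
  have e : p = b ≫ inv a := by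
    rw [IsIso.eq_comp_inv, hpo.w, Category.id_comp]
  rw [e]
  exact hcomp _ _ hb (hiso _ inferInstance)

theorem MCoextensive.terminal_mem [HasTerminal C] {M : MorphismProperty C}
    (hiso : ∀ ⦃A B : C⦄ (f : A ⟶ B), IsIso f → M f)
    (hcomp : ∀ ⦃A B D : C⦄ (f : A ⟶ B) (g : B ⟶ D), M f → M g → M (f ≫ g))
    {X B : C} (hX : MCoextensive M X) (p : X ⟶ B) (hp : IsProductProjection p) :
    M (terminal.from B) := by
  have hpM := hX.proj_mem hiso hcomp p hp
  have hXT := isBinaryProduct_id_of_isTerminal terminalIsTerminal (terminal.from X)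
  obtain ⟨R, a, b, hpo, ha, hb⟩ := hX.pushout_exists p (terminal.from X) hpM ⟨_, _, hXT.swap'⟩
  have hsq : IsPushout (𝟙 X) p p (𝟙 B) := IsPushout.of_horiz_isIso ⟨by simp⟩
  obtain ⟨hl⟩ := (hX.isBinaryProduct_iff (𝟙 X) (terminal.from X) p p a (𝟙 B) b hXT hpM hpM ha
    hsq.w hpo.w).2 ⟨⟨hsq, hpM, hiso _ inferInstance⟩, hpo, ha, hb⟩
  have huniq : ∀ s : B ⟶ R, s = b := by
    intro s
    obtain ⟨l, h1, h2⟩ := BinaryFan.IsLimit.lift' hl (𝟙 B) s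
    change B ⟶ B at l
    have h1' : l = 𝟙 B := (Category.comp_id l).symm.trans h1
    have h2' : l ≫ b = s := h2
    rw [← h2', h1', Category.id_comp]
  have hinv : terminal.from R ≫ a = 𝟙 R := by
    apply hpo.hom_ext
    · rw [← Category.assoc, Subsingleton.elim (a ≫ terminal.from R) (𝟙 _)]
      simp
    · rw [huniq (b ≫ terminal.from R ≫ a), Category.comp_id]
  have : IsIso (terminal.from R) := ⟨a, hinv, Subsingleton.elim _ _⟩
  rw [Subsingleton.elim (terminal.from B) (b ≫ terminal.from R)]
  exact hcomp _ _ hb (hiso _ inferInstance)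

/-- The key square. -/
theorem MCoextensive.key [HasTerminal C] {M : MorphismProperty C}
    (hiso : ∀ ⦃A B : C⦄ (f : A ⟶ B), IsIso f → M f)
    (hcomp : ∀ ⦃A B D : C⦄ (f : A ⟶ B) (g : B ⟶ D), M f → M g → M (f ≫ g))
    {X A B : C} (hX : MCoextensive M X) (p : X ⟶ A) (q : X ⟶ B) (h : IsBinaryProduct p q) :
    IsPushout p p (𝟙 A) (𝟙 A) ∧ IsPushout q p (terminal.from B) (terminal.from A) := by
  have hr := (hX.isBinaryProduct_iff p q p (𝟙 A) (terminal.from B) (𝟙 A) (terminal.from A) h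
    (hX.proj_mem hiso hcomp p ⟨_, _, h⟩) (hiso _ inferInstance)
    (hX.terminal_mem hiso hcomp q ⟨_, _, h.swap'⟩) rfl (Subsingleton.elim _ _)).1
    (isBinaryProduct_id_of_isTerminal terminalIsTerminal _)
  exact ⟨hr.1.1, hr.2.1⟩

/-- An `M`-coextensive object has co-disjoint products: its product projections are
epimorphisms, and the pushout of complementary product projections is terminal. -/
theorem mCoextensive_codisjoint_products
    {C : Type u} [Category.{v} C] [HasFiniteProducts C] (M : MorphismProperty C)
    (hiso : ∀ ⦃A B : C⦄ (f : A ⟶ B), IsIso f → M f)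
    (hcomp : ∀ ⦃A B D : C⦄ (f : A ⟶ B) (g : B ⟶ D), M f → M g → M (f ≫ g))
    (hprod : ∀ ⦃A B A' B' : C⦄ (f : A ⟶ B) (g : A' ⟶ B'), M f → M g → M (prod.map f g))
    (X : C) (hX : MCoextensive M X) :
    (∀ ⦃A : C⦄ (p : X ⟶ A), IsProductProjection p → Epi p) ∧
    (∀ ⦃A B : C⦄ (π₁ : X ⟶ A) (π₂ : X ⟶ B), IsBinaryProduct π₁ π₂ →
      ∃ (P : C) (a : A ⟶ P) (b : B ⟶ P), IsPushout π₁ π₂ a b ∧ Nonempty (IsTerminal P)) := by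
  constructor
  · rintro A p ⟨B, q, h⟩
    have hpo := (hX.key hiso hcomp p q h).1
    constructor
    intro Z u v huv
    have h1 := hpo.inl_desc u v huv
    have h2 := hpo.inr_desc u v huv
    rw [← h1, h2]
  · intro A B p q h
    exact ⟨_, _, _, (hX.key hiso hcomp p q h).2.flip, ⟨terminalIsTerminal⟩⟩
end

section
/- Let C be a category with finite products and M a class of morphisms of C that contains all isomorphisms, is closed under composition, and is closed under binary products. Let X be an M-coextensive object of C and p : X → A a product projection. Then for any morphism f : A → B, if the composite f∘p belongs to M, then f belongs to M. -/
open CategoryTheory CategoryTheory.Limits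

universe v u

variable {C : Type u} [Category.{v} C]

/-- If `p : X ⟶ A` is a product projection of an `M`-coextensive object `X` and
`p ≫ f ∈ M`, then `f ∈ M`. -/
theorem mem_of_comp_productProjection_mem
    {C : Type u} [Category.{v} C] [HasFiniteProducts C] (M : MorphismProperty C)
    (hiso : ∀ ⦃A B : C⦄ (f : A ⟶ B), IsIso f → M f)
    (hcomp : ∀ ⦃A B D : C⦄ (f : A ⟶ B) (g : B ⟶ D), M f → M g → M (f ≫ g))
    (hprod : ∀ ⦃A B A' B' : C⦄ (f : A ⟶ B) (g : A' ⟶ B'), M f → M g → M (prod.map f g))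
    (X : C) (hX : MCoextensive M X)
    {A B : C} (p : X ⟶ A) (hp : IsProductProjection p) (f : A ⟶ B)
    (hfp : M (p ≫ f)) : M f := by
  obtain ⟨A', q, hpq⟩ := hp
  obtain ⟨P, a, b, hP, ha, hb⟩ := hX.pushout_exists (p ≫ f) p hfp ⟨A', q, hpq⟩
  have hq : IsProductProjection q := ⟨A, p, hpq.map fun h => BinaryFan.isLimitFlip h⟩
  obtain ⟨Q, c, d, hQ, hc, hd⟩ := hX.pushout_exists (p ≫ f) q hfp hq
  obtain ⟨hl⟩ := (hX.isBinaryProduct_iff p q (p ≫ f) a c b d hpq hfp ha hc hP.w hQ.w).2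
    ⟨⟨hP, ha, hb⟩, ⟨hQ, hc, hd⟩⟩
  obtain ⟨u, hau, hbu⟩ : ∃ u : P ⟶ B, a ≫ u = f ∧ b ≫ u = 𝟙 B :=
    ⟨hP.desc f (𝟙 B) (by simp), hP.inl_desc _ _ _, hP.inr_desc _ _ _⟩
  obtain ⟨s, hs'⟩ : ∃ s : P ⟶ B, s ≫ b = 𝟙 P := by
    obtain ⟨s, hs, -⟩ := BinaryFan.IsLimit.lift' hl (𝟙 P) (u ≫ d)
    exact ⟨s, hs⟩
  have hsu : s = u := by
    calc s = s ≫ b ≫ u := by rw [hbu, Category.comp_id]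
      _ = u := by rw [← Category.assoc, hs', Category.id_comp]
  subst hsu
  rw [← hau]
  exact hcomp _ _ ha (hiso _ ⟨b, hs', hbu⟩)
end

section
/- Let C be a category with finite products and X a projection-coextensive object of C. Suppose (a_i : X → A_i)_{i∈I} and (b_j : X → B_j)_{j∈J} are two product diagrams for X indexed by finite types I and J, in which every A_i and every B_j is directly-irreducible. Then there exists a bijection σ : I → J and isomorphisms f_i : A_i → B_{σ(i)} such that f_i∘a_i = b_{σ(i)} for every i ∈ I. -/
open CategoryTheory CategoryTheory.Limits

universe v u

variable {C : Type u} [Category.{v} C]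

/-- An object `A` is directly-irreducible if it is not terminal and in every binary
product diagram on `A` one of the projections is an isomorphism. -/
def DirectlyIrreducible {C : Type u} [Category.{v} C] (A : C) : Prop :=
  ¬ Nonempty (IsTerminal A) ∧
    ∀ ⦃P Q : C⦄ (p : A ⟶ P) (q : A ⟶ Q), IsBinaryProduct p q → IsIso p ∨ IsIso q


namespace PCU

section
variable {C : Type u} [Category.{v} C]

lemma ibp_mk {X A B : C} (p : X ⟶ A) (q : X ⟶ B)
    (h : ∀ (T : C) (f : T ⟶ A) (g : T ⟶ B), ∃ l : T ⟶ X, l ≫ p = f ∧ l ≫ q = g)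
    (hu : ∀ (T : C) (l m : T ⟶ X), l ≫ p = m ≫ p → l ≫ q = m ≫ q → l = m) :
    IsBinaryProduct p q := by
  choose l h1 h2 using h
  exact ⟨BinaryFan.IsLimit.mk _ (fun {T} f g => l T f g) (fun f g => h1 _ f g)
    (fun f g => h2 _ f g)
    (fun {T} f g m e1 e2 => hu T _ _ (e1.trans (h1 _ f g).symm) (e2.trans (h2 _ f g).symm))⟩

lemma ibp_lift {X A B : C} {p : X ⟶ A} {q : X ⟶ B} (h : IsBinaryProduct p q)
    {T : C} (f : T ⟶ A) (g : T ⟶ B) : ∃ l : T ⟶ X, l ≫ p = f ∧ l ≫ q = g := by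
  obtain ⟨h⟩ := h
  obtain ⟨l, h1, h2⟩ := BinaryFan.IsLimit.lift' h f g
  exact ⟨l, h1, h2⟩

lemma ibp_ext {X A B : C} {p : X ⟶ A} {q : X ⟶ B} (h : IsBinaryProduct p q)
    {T : C} {l m : T ⟶ X} (h1 : l ≫ p = m ≫ p) (h2 : l ≫ q = m ≫ q) : l = m := by
  obtain ⟨h⟩ := h
  exact BinaryFan.IsLimit.hom_ext h h1 h2

lemma ibp_symm {X A B : C} {p : X ⟶ A} {q : X ⟶ B} (h : IsBinaryProduct p q) :
    IsBinaryProduct q p := by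
  refine ibp_mk _ _ (fun T f g => ?_) (fun T l m h1 h2 => ibp_ext h h2 h1)
  obtain ⟨l, h1, h2⟩ := ibp_lift h g f
  exact ⟨l, h2, h1⟩

variable [HasFiniteProducts C]

lemma ibp_id (X : C) : IsBinaryProduct (𝟙 X) (terminal.from X) :=
  ibp_mk _ _ (fun T f g => ⟨f, by simp, Subsingleton.elim _ _⟩)
    (fun T l m h1 _ => by simpa using h1)

lemma ibp_prod (X Y : C) : IsBinaryProduct (prod.fst : X ⨯ Y ⟶ X) (prod.snd : X ⨯ Y ⟶ Y) :=
  ibp_mk _ _ (fun T f g => ⟨prod.lift f g, prod.lift_fst _ _, prod.lift_snd _ _⟩)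
    (fun T l m h1 h2 => Limits.prod.hom_ext h1 h2)

lemma pp_id (X : C) : IsProductProjection (𝟙 X) := ⟨_, _, ibp_id X⟩

lemma pp_term (X : C) : IsProductProjection (terminal.from X) := ⟨_, _, ibp_symm (ibp_id X)⟩

lemma ibp_comp {X Y W U V : C} {y : X ⟶ Y} {w : X ⟶ W} {u' : Y ⟶ U} {v' : Y ⟶ V}
    (h : IsBinaryProduct y w) (k : IsBinaryProduct u' v') :
    IsBinaryProduct (y ≫ v') (prod.lift (y ≫ u') w) := by
  refine ibp_mk _ _ (fun T f g => ?_) (fun T l m h1 h2 => ?_)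
  · obtain ⟨s, s1, s2⟩ := ibp_lift k (g ≫ prod.fst) f
    obtain ⟨l, l1, l2⟩ := ibp_lift h s (g ≫ prod.snd)
    refine ⟨l, by rw [reassoc_of% l1, s2], ?_⟩
    apply Limits.prod.hom_ext
    · rw [Category.assoc, prod.lift_fst, reassoc_of% l1, s1]
    · rw [Category.assoc, prod.lift_snd, l2]
  · have e1 := congrArg (· ≫ prod.fst) h2
    have e2 := congrArg (· ≫ prod.snd) h2
    simp only [Category.assoc, prod.lift_fst, prod.lift_snd] at e1 e2
    exact ibp_ext h (ibp_ext k (by simpa using e1) (by simpa using h1)) e2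

variable {X : C}

lemma key (hX : ProjectionCoextensive X) {P Q : C} {p : X ⟶ P} {q : X ⟶ Q} (h : IsBinaryProduct p q) :
    Epi p ∧ IsPushout q p (terminal.from Q) (terminal.from P) := by
  have := (hX.isBinaryProduct_iff p q p (𝟙 P) (terminal.from Q) (𝟙 P) (terminal.from P) h
    ⟨_, _, h⟩ (pp_id _) (pp_term _) rfl (Subsingleton.elim _ _)).1 (ibp_id P)
  refine ⟨⟨fun f g e => ?_⟩, this.2.1⟩
  have h1 := this.1.1.inl_desc f g e
  have h2 := this.1.1.inr_desc f g e
  rw [← h1, h2]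

lemma epi_pp (hX : ProjectionCoextensive X) {P : C} {p : X ⟶ P} (h : IsProductProjection p) : Epi p := by
  obtain ⟨Q, q, h⟩ := h
  exact (key hX h).1

lemma dich (hX : ProjectionCoextensive X) {P Q A : C} {p : X ⟶ P} {q : X ⟶ Q} (h : IsBinaryProduct p q) {a : X ⟶ A}
    (ha : IsProductProjection a) (hA : DirectlyIrreducible A) :
    (∃ g, a = p ≫ g) ∨ (∃ g, a = q ≫ g) := by
  obtain ⟨R, α, β, hR⟩ := hX.pushout_exists a p ha ⟨_, _, h⟩
  obtain ⟨S, γ, δ, hS⟩ := hX.pushout_exists a q ha ⟨_, _, ibp_symm h⟩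
  have := (hX.isBinaryProduct_iff p q a α γ β δ h ha hR.2.1 hS.2.1 hR.1.w hS.1.w).2 ⟨hR, hS⟩
  rcases hA.2 _ _ this with i | i
  · exact Or.inl ⟨α ≫ inv β, by rw [← Category.assoc, hR.1.w]; simp⟩
  · exact Or.inr ⟨γ ≫ inv δ, by rw [← Category.assoc, hS.1.w]; simp⟩

lemma not_term (hX : ProjectionCoextensive X) {A T : C} {a : X ⟶ A} (ha : IsProductProjection a) (hA : DirectlyIrreducible A)
    (hT : IsTerminal T) (s : X ⟶ T) (t : T ⟶ A) (h : a = s ≫ t) : False := by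
  have := epi_pp hX ha
  refine hA.1 ⟨hT.ofIso ⟨t, hT.from A, hT.hom_ext _ _, ?_⟩⟩
  rw [← cancel_epi a, ← Category.assoc, hT.hom_ext (a ≫ hT.from A) s, ← h, Category.comp_id]

lemma not_both (hX : ProjectionCoextensive X) {P Q A : C} {p : X ⟶ P} {q : X ⟶ Q} (h : IsBinaryProduct p q) {a : X ⟶ A}
    (ha : IsProductProjection a) (hA : DirectlyIrreducible A) (g : P ⟶ A) (k : Q ⟶ A)
    (h1 : a = p ≫ g) (h2 : a = q ≫ k) : False := by
  have hp := (key hX h).2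
  have e : q ≫ k = p ≫ g := h2.symm.trans h1
  refine not_term hX ha hA terminalIsTerminal (p ≫ terminal.from P) (hp.desc k g e) ?_
  rw [Category.assoc, hp.inr_desc, h1]

lemma prime (hX : ProjectionCoextensive X) {Y W U V A : C} {y : X ⟶ Y} {w : X ⟶ W} {u' : Y ⟶ U} {v' : Y ⟶ V}
    (h : IsBinaryProduct y w) (k : IsBinaryProduct u' v') {a : X ⟶ A}
    (ha : IsProductProjection a) (hA : DirectlyIrreducible A) (g : Y ⟶ A) (hg : a = y ≫ g) :
    (∃ l, a = (y ≫ u') ≫ l) ∨ (∃ l, a = (y ≫ v') ≫ l) := by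
  rcases dich hX (ibp_comp h k) ha hA with h1 | ⟨m, hm⟩
  · exact Or.inr h1
  · left
    have := ((hX.isBinaryProduct_iff y w (prod.lift (y ≫ u') w) u' (𝟙 W) prod.fst prod.snd h
      ⟨_, _, ibp_symm (ibp_comp h k)⟩ ⟨_, _, k⟩ (pp_id _) (prod.lift_fst _ _).symm
      ((Category.comp_id _).trans (prod.lift_snd _ _).symm)).1
      (ibp_prod U W)).1.1
    have e : y ≫ g = prod.lift (y ≫ u') w ≫ m := hg.symm.trans hm
    exact ⟨this.desc g m e, by rw [Category.assoc, this.inl_desc, hg]⟩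

/-- elementary form of being a product cone -/
def IsFan {J : Type} {Y : C} {B : J → C} (b : ∀ j, Y ⟶ B j) : Prop :=
  (∀ (T : C) (f : ∀ j, T ⟶ B j), ∃ l : T ⟶ Y, ∀ j, l ≫ b j = f j) ∧
  (∀ (T : C) (l m : T ⟶ Y), (∀ j, l ≫ b j = m ≫ b j) → l = m)

lemma isFan_of {J : Type} {Y : C} {B : J → C} (b : ∀ j, Y ⟶ B j)
    (h : Nonempty (IsLimit (Fan.mk Y b))) : IsFan b := by
  obtain ⟨h⟩ := h
  refine ⟨fun T f => ⟨h.lift (Fan.mk T f), fun j => h.fac (Fan.mk T f) ⟨j⟩⟩,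
    fun T l m e => h.hom_ext fun ⟨j⟩ => e j⟩

lemma isFan_compl {J : Type} [Finite J] {Y : C} {B : J → C} (b : ∀ j, Y ⟶ B j)
    (h : IsFan b) (j : J) :
    IsBinaryProduct (b j) (Pi.lift (fun k : {k // k ≠ j} => b k.1)) := by
  classical
  refine ibp_mk _ _ (fun T f g => ?_) (fun T l m h1 h2 => ?_)
  · obtain ⟨l, hl⟩ := h.1 T (fun k => if e : k = j then f ≫ eqToHom (by rw [e]) else
      g ≫ Pi.π (fun k : {k // k ≠ j} => B k.1) ⟨k, e⟩)
    refine ⟨l, by simp [hl], ?_⟩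
    apply Limits.Pi.hom_ext
    rintro ⟨k, hk⟩
    simp [hl, hk]
  · refine h.2 _ _ _ fun k => ?_
    by_cases e : k = j
    · subst e; exact h1
    · have := congrArg (· ≫ Pi.π (fun k : {k // k ≠ j} => B k.1) ⟨k, e⟩) h2
      simpa using this

lemma prime_fan (hX : ProjectionCoextensive X) {A : C} {a : X ⟶ A}
    (ha : IsProductProjection a) (hA : DirectlyIrreducible A) (J : Type) [Finite J] :
    ∀ (Y : C) (y : X ⟶ Y) (B : J → C) (b : ∀ j, Y ⟶ B j), IsProductProjection y → IsFan b →
      ∀ g, a = y ≫ g → ∃ j l, a = (y ≫ b j) ≫ l := by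
  induction J using Finite.induction_empty_option with
  | of_equiv e ih =>
    intro Y y B b hy hb g hg
    obtain ⟨j, l, h⟩ := ih Y y (fun j => B (e j)) (fun j => b (e j)) hy
      ⟨fun T f => by
        obtain ⟨l, hl⟩ := hb.1 T (fun j => f (e.symm j) ≫ eqToHom (by simp))
        refine ⟨l, fun j => ?_⟩
        rw [hl]
        have : ∀ i (hi : i = j), f i ≫ eqToHom (by rw [hi]) = f j := by
          rintro _ rfl; simp
        exact this _ (by simp),
       fun T l m h => hb.2 T l m fun j => by
        obtain ⟨i, rfl⟩ := e.surjective j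
        exact h i⟩ g hg
    exact ⟨e j, l, h⟩
  | h_empty =>
    intro Y y B b hy hb g hg
    refine (not_term hX ha hA (T := Y) (IsTerminal.ofUniqueHom
      (fun T => (hb.1 T (fun j => j.elim)).choose) (fun T m => hb.2 T _ _ fun j => j.elim))
      y g hg).elim
  | h_option ih =>
    rename_i J' _
    intro Y y B b hy hb g hg
    have k : IsBinaryProduct (b none) (Pi.lift (fun j : J' => b (some j))) := by
      refine ibp_mk _ _ (fun T f g => ?_) (fun T l m h1 h2 => ?_)
      · obtain ⟨l, hl⟩ := hb.1 T (fun k => match k with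
          | none => f
          | some j => g ≫ Pi.π (fun j : J' => B (some j)) j)
        refine ⟨l, hl none, ?_⟩
        apply Limits.Pi.hom_ext
        intro j
        simp [hl (some j)]
      · refine hb.2 _ _ _ fun k => ?_
        rcases k with _ | j
        · exact h1
        · have := congrArg (· ≫ Pi.π (fun j : J' => B (some j)) j) h2
          simpa using this
    obtain ⟨W, w, hw⟩ := hy
    rcases prime hX hw k ha hA g hg with ⟨l, hl⟩ | ⟨l, hl⟩
    · exact ⟨none, l, hl⟩
    · obtain ⟨j, m, hm⟩ := ih _ (y ≫ Pi.lift (fun j : J' => b (some j))) _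
        (fun j => Pi.π (fun j : J' => B (some j)) j) ⟨_, _, ibp_comp hw k⟩
        ⟨fun T f => ⟨Pi.lift f, fun j => by simp⟩, fun T l m h => Limits.Pi.hom_ext _ _ h⟩ l hl
      exact ⟨some j, m, by simpa using hm⟩

lemma uniq (hX : ProjectionCoextensive X) {I : Type} [Finite I] {A : I → C} {a : ∀ i, X ⟶ A i} (ha : IsFan a)
    (hA : ∀ i, DirectlyIrreducible (A i)) (i i' : I) (g : A i' ⟶ A i) (h : a i = a i' ≫ g) :
    i' = i := by
  by_contra hne
  refine not_both hX (isFan_compl a ha i) ⟨_, _, isFan_compl a ha i⟩ (hA i) (𝟙 _)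
    (Pi.π (fun k : {k // k ≠ i} => A k.1) ⟨i', hne⟩ ≫ g) (by simp) ?_
  rw [← Category.assoc, Pi.lift_π, h]

end

end PCU

/-- Uniqueness of direct decompositions of a projection-coextensive object into
directly-irreducible factors. -/
theorem projectionCoextensive_unique_decomposition
    {C : Type u} [Category.{v} C] [HasFiniteProducts C]
    (X : C) (hX : ProjectionCoextensive X)
    (I J : Type) [Finite I] [Finite J]
    (A : I → C) (B : J → C) (a : ∀ i, X ⟶ A i) (b : ∀ j, X ⟶ B j)
    (ha : Nonempty (IsLimit (Fan.mk X a))) (hb : Nonempty (IsLimit (Fan.mk X b)))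
    (hA : ∀ i, DirectlyIrreducible (A i)) (hB : ∀ j, DirectlyIrreducible (B j)) :
    ∃ (σ : I ≃ J) (e : ∀ i, A i ≅ B (σ i)), ∀ i, a i ≫ (e i).hom = b (σ i) := by
  have ha' := PCU.isFan_of a ha
  have hb' := PCU.isFan_of b hb
  have pa : ∀ i, IsProductProjection (a i) := fun i => ⟨_, _, PCU.isFan_compl a ha' i⟩
  have pb : ∀ j, IsProductProjection (b j) := fun j => ⟨_, _, PCU.isFan_compl b hb' j⟩
  have h1 : ∀ i, ∃ j, ∃ l : B j ⟶ A i, a i = b j ≫ l := fun i => by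
    simpa using PCU.prime_fan hX (pa i) (hA i) J X (𝟙 X) B b (PCU.pp_id X) hb' (a i) (by simp)
  have h2 : ∀ j, ∃ i, ∃ l : A i ⟶ B j, b j = a i ≫ l := fun j => by
    simpa using PCU.prime_fan hX (pb j) (hB j) I X (𝟙 X) A a (PCU.pp_id X) ha' (b j) (by simp)
  choose s g hg using h1
  choose t k hk using h2
  have ts : ∀ i, t (s i) = i := fun i =>
    PCU.uniq hX ha' hA i (t (s i)) (k (s i) ≫ g i) (by rw [← Category.assoc, ← hk, ← hg])
  have st : ∀ j, s (t j) = j := fun j =>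
    PCU.uniq hX hb' hB j (s (t j)) (g (t j) ≫ k j) (by rw [← Category.assoc, ← hg, ← hk])
  have h3 : ∀ i, ∃ m : A i ⟶ B (s i), b (s i) = a i ≫ m := fun i => by
    have : ∀ i', t (s i) = i' → ∃ m : A i' ⟶ B (s i), b (s i) = a i' ≫ m := by
      rintro _ rfl; exact ⟨_, hk (s i)⟩
    exact this i (ts i)
  choose m hm using h3
  refine ⟨⟨s, t, ts, st⟩, fun i => ⟨m i, g i, ?_, ?_⟩, fun i => (hm i).symm⟩
  · have := PCU.epi_pp hX (pa i)
    rw [← cancel_epi (a i), ← Category.assoc, ← hm, ← hg, Category.comp_id]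
  · have := PCU.epi_pp hX (pb (s i))
    change g i ≫ m i = 𝟙 (B (s i))
    rw [← cancel_epi (b (s i)), ← Category.assoc, ← hg, ← hm, Category.comp_id]
end

section
/- Let C be a category with finite products and X a projection-coextensive object of C. Let p : X → A be a product projection, and let q : X → B and q' : X → B' both be complements of p (i.e., both (p, q) and (p, q') are binary product diagrams). Then there exists an isomorphism β : B → B' such that β∘q = q'. -/
open CategoryTheory CategoryTheory.Limits

universe v u

variable {C : Type u} [Category.{v} C]

theorem aux_term_id {C : Type u} [Category.{v} C] [HasFiniteProducts C] (A : C) :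
    IsBinaryProduct (𝟙 A) (terminal.from A) :=
  ⟨BinaryFan.IsLimit.mk _ (fun f _ => f) (by intros; simp) (by intros; exact terminalIsTerminal.hom_ext _ _)
    (by intro T f g m h1 h2; simpa using h1)⟩

theorem aux_id_term {C : Type u} [Category.{v} C] [HasFiniteProducts C] (A : C) :
    IsBinaryProduct (terminal.from A) (𝟙 A) :=
  ⟨BinaryFan.IsLimit.mk _ (fun _ f => f) (by intros; exact terminalIsTerminal.hom_ext _ _) (by intros; simp)
    (by intro T f g m h1 h2; simpa using h2)⟩

theorem aux_isIso {C : Type u} [Category.{v} C] [HasFiniteProducts C] {A P : C} (b : A ⟶ P)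
    (h : IsBinaryProduct (terminal.from A) b) : IsIso b := by
  obtain ⟨h⟩ := h
  obtain ⟨s, -, h2⟩ := BinaryFan.IsLimit.lift' h (terminal.from P) (𝟙 P)
  have h2 : s ≫ b = 𝟙 P := h2
  refine ⟨s, ?_, h2⟩
  apply BinaryFan.IsLimit.hom_ext h
  · exact terminalIsTerminal.hom_ext _ _
  · change (b ≫ s) ≫ b = 𝟙 A ≫ b
    rw [Category.assoc, h2]; simp

theorem aux_pushout_terminal {C : Type u} [Category.{v} C] [HasFiniteProducts C]
    (X : C) (hX : ProjectionCoextensive X) {A B : C} (p : X ⟶ A) (q : X ⟶ B)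
    (hq : IsBinaryProduct p q) :
    IsMPushout (projections C) p q (terminal.from A) (terminal.from B) := by
  have h := ((hX.isBinaryProduct_iff p q p (𝟙 A) (terminal.from B) (𝟙 A) (terminal.from A)
    hq ⟨_, _, hq⟩ ⟨_, _, aux_term_id A⟩ ⟨_, _, aux_id_term B⟩ rfl
    (Subsingleton.elim _ _)).1 (aux_term_id A)).2
  exact ⟨h.1.flip, h.2.2, h.2.1⟩

theorem aux_swap {C : Type u} [Category.{v} C] {X A B : C} {p : X ⟶ A} {q : X ⟶ B}
    (hq : IsBinaryProduct p q) : IsBinaryProduct q p :=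
  hq.elim fun h => ⟨BinaryFan.isLimitFlip h⟩

theorem aux_leg {C : Type u} [Category.{v} C] [HasFiniteProducts C]
    (X : C) (hX : ProjectionCoextensive X)
    {A B B' P : C} (p : X ⟶ A) (q : X ⟶ B) (q' : X ⟶ B')
    (hq : IsBinaryProduct p q) (hq' : IsBinaryProduct p q') (a : B ⟶ P) (b : B' ⟶ P)
    (h : IsMPushout (projections C) q q' a b) : IsIso b :=
  aux_isIso b ((hX.isBinaryProduct_iff p q q' (terminal.from A) a (terminal.from B') b
    hq ⟨_, _, aux_swap hq'⟩ ⟨_, _, aux_id_term A⟩ h.2.1 (Subsingleton.elim _ _) h.1.w).2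
    (And.intro (aux_pushout_terminal X hX p q' hq') (show IsMPushout (projections C) q _ a b from h)))

/-- Complements of a product projection of a projection-coextensive object are
unique up to a compatible isomorphism. -/
theorem projectionCoextensive_complements_unique
    {C : Type u} [Category.{v} C] [HasFiniteProducts C]
    (X : C) (hX : ProjectionCoextensive X)
    {A B B' : C} (p : X ⟶ A) (q : X ⟶ B) (q' : X ⟶ B')
    (hq : IsBinaryProduct p q) (hq' : IsBinaryProduct p q') :
    ∃ β : B ≅ B', q ≫ β.hom = q' := by
  obtain ⟨P, a, b, h⟩ := hX.pushout_exists q' q ⟨_, _, aux_swap hq'⟩ ⟨_, _, aux_swap hq⟩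
  have hb : IsIso b := aux_leg X hX p q q' hq hq' a b h
  have ha : IsIso a := aux_leg X hX p q' q hq' hq b a ⟨h.1.flip, h.2.2, h.2.1⟩
  refine ⟨asIso a ≪≫ (asIso b).symm, ?_⟩
  have hw := h.1.w
  simp [reassoc_of% hw]
end

section
/- Let C be a category with finite products and X a projection-coextensive object of C. If (a : X → A, b : X → B) is a binary product diagram and a is an isomorphism, then B is a terminal object. -/
open CategoryTheory CategoryTheory.Limits

universe v u

variable {C : Type u} [Category.{v} C]

/-- If `(a, b)` is a binary product diagram on a projection-coextensive object and
`a` is an isomorphism, then `B` is terminal. -/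
theorem projectionCoextensive_isTerminal_of_isIso
    {C : Type u} [Category.{v} C] [HasFiniteProducts C]
    (X : C) (hX : ProjectionCoextensive X)
    {A B : C} (a : X ⟶ A) (b : X ⟶ B) (hab : IsBinaryProduct a b) (ha : IsIso a) :
    Nonempty (IsTerminal B) := by
  have key : ∀ {Z W : C} (f : Z ⟶ W) [IsIso f], IsBinaryProduct f (terminal.from Z) := by
    intro Z W f _
    refine ⟨BinaryFan.IsLimit.mk _ (fun g _ => g ≫ inv f) ?_ ?_ ?_⟩
    · intro T g h
      simp
    · intro T g h
      exact terminalIsTerminal.hom_ext _ _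
    · intro T g h m h1 _
      rw [← h1]
      simp
  have key' : IsBinaryProduct (terminal.from B) (𝟙 B) := by
    refine ⟨BinaryFan.IsLimit.mk _ (fun _ h => h) ?_ ?_ ?_⟩
    · intro T g h
      exact terminalIsTerminal.hom_ext _ _
    · intro T g h
      simp
    · intro T g h m _ h1
      rw [← h1]
      simp
  have h := (hX.isBinaryProduct_iff a b (𝟙 X) (𝟙 A) (terminal.from B) a (terminal.from X) hab
    ⟨_, _, key (𝟙 X)⟩ ⟨_, _, key (𝟙 A)⟩ ⟨_, _, key'⟩ (by simp)
    (terminalIsTerminal.hom_ext _ _)).1 (key a)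
  have hp := h.2.1
  have : IsIso (terminal.from B) := hp.isIso_inl_of_isIso
  exact ⟨terminalIsTerminal.ofIso (asIso (terminal.from B)).symm⟩
end

section
/- Let C be a category with finite products and X a projection-coextensive object of C. Let (π₁ : X → A, π₂ : X → A') and (π₁' : X → B, π₂' : X → B') be two binary product diagrams for X. If π₁' factors through π₁ (i.e., there exists u : A → B with u∘π₁ = π₁'), then π₂ factors through π₂' (i.e., there exists v : B' → A' with v∘π₂' = π₂). In other words, complementation of product projections is order-reversing. -/
open CategoryTheory CategoryTheory.Limits

universe v u

variable {C : Type u} [Category.{v} C]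

/-- Complementation of product projections of a projection-coextensive object is
order-reversing. -/
theorem projectionCoextensive_complement_orderReversing
    {C : Type u} [Category.{v} C] [HasFiniteProducts C]
    (X : C) (hX : ProjectionCoextensive X)
    {A A' B B' : C} (π₁ : X ⟶ A) (π₂ : X ⟶ A') (π₁' : X ⟶ B) (π₂' : X ⟶ B')
    (h₁ : IsBinaryProduct π₁ π₂) (h₂ : IsBinaryProduct π₁' π₂')
    (u : A ⟶ B) (hu : π₁ ≫ u = π₁') :
    ∃ v : B' ⟶ A', π₂' ≫ v = π₂ := by
  have hterm : ∀ Z : C, IsBinaryProduct (𝟙 Z) (terminal.from Z) := fun Z =>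
    ⟨BinaryFan.IsLimit.mk _ (fun f _ => f) (fun f g => by simp)
      (fun f g => Subsingleton.elim (α := _ ⟶ ⊤_ C) _ _) (fun f g m h _ => by simpa using h)⟩
  have hterm' : ∀ Z : C, IsBinaryProduct (terminal.from Z) (𝟙 Z) := fun Z =>
    ⟨BinaryFan.IsLimit.mk _ (fun _ f => f)
      (fun f g => Subsingleton.elim (α := _ ⟶ ⊤_ C) _ _) (fun f g => by simp)
      (fun f g m _ h => by simpa using h)⟩
  have hπ₁ : projections C π₁ := ⟨_, _, h₁⟩
  have symm : ∀ {X A B : C} {p : X ⟶ A} {q : X ⟶ B}, IsBinaryProduct p q →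
      IsBinaryProduct q p := fun h => ⟨BinaryFan.isLimitFlip h.some⟩
  have hπ₂ : projections C π₂ := ⟨_, _, symm h₁⟩
  -- the pushout of the two complementary projections is terminal
  have hp := ((hX.isBinaryProduct_iff π₁ π₂ π₁ (𝟙 A) (terminal.from A') (𝟙 A)
    (terminal.from A) h₁ hπ₁ ⟨_, _, hterm A⟩ ⟨_, _, hterm' A'⟩ rfl
    (Subsingleton.elim _ _)).1 (hterm A)).2.1
  obtain ⟨P₁, a₁, r₁, h1⟩ := hX.pushout_exists π₂ π₁' hπ₂ ⟨_, _, h₂⟩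
  obtain ⟨P₂, a₂, r₂, h2⟩ := hX.pushout_exists π₂ π₂' hπ₂ ⟨_, _, symm h₂⟩
  obtain ⟨hl⟩ := (hX.isBinaryProduct_iff π₁' π₂' π₂ a₁ a₂ r₁ r₂ h₂ hπ₂ h1.2.1 h2.2.1
    h1.1.w h2.1.w).2 ⟨h1, h2⟩
  have w : π₂ ≫ r₁ = π₁ ≫ (u ≫ a₁) := by rw [← Category.assoc, hu, h1.1.w]
  let t : ⊤_ C ⟶ P₁ := hp.desc r₁ (u ≫ a₁) w
  have ht : terminal.from A' ≫ t = r₁ := hp.inl_desc _ _ _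
  obtain ⟨s, hs₁, hs₂⟩ := BinaryFan.IsLimit.lift' hl (terminal.from P₂ ≫ t) (𝟙 P₂)
  have hs₁' : s ≫ r₁ = terminal.from P₂ ≫ t := hs₁
  have hs₂' : s ≫ r₂ = 𝟙 P₂ := hs₂
  have key : r₂ ≫ s = 𝟙 A' := by
    apply BinaryFan.IsLimit.hom_ext hl
    · change (r₂ ≫ s) ≫ r₁ = 𝟙 A' ≫ r₁
      rw [Category.assoc, hs₁', ← Category.assoc, Category.id_comp, ← ht]
      congr 1
      exact Subsingleton.elim _ _
    · change (r₂ ≫ s) ≫ r₂ = 𝟙 A' ≫ r₂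
      rw [Category.assoc, hs₂', Category.comp_id, Category.id_comp]
  refine ⟨a₂ ≫ s, ?_⟩
  rw [← Category.assoc, h2.1.w, Category.assoc, key, Category.comp_id]
end

section
/- Let C be a regular category and consider a commutative diagram in which the top row (π₁ : X → A₁, π₂ : X → A₂) is a binary product diagram, the bottom row (π₁' : Y → B₁, π₂' : Y → B₂) is a binary product diagram, the vertical morphisms p₁ : A₁ → B₁, p : X → Y, p₂ : A₂ → B₂ are regular epimorphisms, and p₁∘π₁ = π₁'∘p and p₂∘π₂ = π₂'∘p. If X has global support, then both squares are pushouts. -/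
open CategoryTheory CategoryTheory.Limits

universe v u

variable {C : Type u} [Category.{v} C]

theorem IsRegularEpimorphism.epi_aux {C : Type u} [Category.{v} C] {X Y : C} {f : X ⟶ Y}
    (hf : IsRegularEpimorphism f) : Epi f := by
  obtain ⟨W, a, b, h, ⟨hc⟩⟩ := hf
  exact ⟨fun g k hgk => Cofork.IsColimit.hom_ext hc hgk⟩

theorem pushout_square_aux
    {C : Type u} [Category.{v} C] [HasFiniteLimits C] [IsRegularCategory C]
    {X A₁ A₂ Y B₁ B₂ : C} (π₁ : X ⟶ A₁) (π₂ : X ⟶ A₂)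
    (p₁ : A₁ ⟶ B₁) (p : X ⟶ Y) (p₂ : A₂ ⟶ B₂) (π₁' : Y ⟶ B₁) (π₂' : Y ⟶ B₂)
    (htop : IsBinaryProduct π₁ π₂) (hbot : IsBinaryProduct π₁' π₂')
    (hp₁ : IsRegularEpimorphism p₁) (hp : IsRegularEpimorphism p)
    (c₁ : π₁ ≫ p₁ = p ≫ π₁') (c₂ : π₂ ≫ p₂ = p ≫ π₂')
    (hgs : HasGlobalSupport X) :
    IsPushout π₁ p p₁ π₁' := by
  have ep : Epi p := hp.epi_aux
  have ep₁ : Epi p₁ := hp₁.epi_aux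
  obtain ⟨W, a, b, hab, ⟨hc⟩⟩ := hp₁
  obtain ⟨ht⟩ := htop
  obtain ⟨hb⟩ := hbot
  have key : ∀ {T : C} (s : A₁ ⟶ T) (t : Y ⟶ T), π₁ ≫ s = p ≫ t → a ≫ s = b ≫ s := by
    intro T s t hst
    let e := pullback.snd (terminal.from X) (terminal.from W)
    let x := pullback.fst (terminal.from X) (terminal.from W)
    have ee : Epi e := (IsRegularCategory.regularEpi_stable _ _ hgs).epi_aux
    obtain ⟨α, hα₁, hα₂⟩ := BinaryFan.IsLimit.lift' ht (e ≫ a) (x ≫ π₂)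
    obtain ⟨β, hβ₁, hβ₂⟩ := BinaryFan.IsLimit.lift' ht (e ≫ b) (x ≫ π₂)
    change α ≫ π₁ = _ at hα₁
    change α ≫ π₂ = _ at hα₂
    change β ≫ π₁ = _ at hβ₁
    change β ≫ π₂ = _ at hβ₂
    have h : α ≫ p = β ≫ p := by
      apply BinaryFan.IsLimit.hom_ext hb
      · change (α ≫ p) ≫ π₁' = (β ≫ p) ≫ π₁'
        rw [Category.assoc, Category.assoc, ← c₁, reassoc_of% hα₁, reassoc_of% hβ₁, hab]
      · change (α ≫ p) ≫ π₂' = (β ≫ p) ≫ π₂'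
        rw [Category.assoc, Category.assoc, ← c₂, reassoc_of% hα₂, reassoc_of% hβ₂]
    rw [← cancel_epi e, ← reassoc_of% hα₁, ← reassoc_of% hβ₁, hst, reassoc_of% h]
  refine ⟨⟨c₁⟩, ⟨PushoutCocone.IsColimit.mk _
    (fun s => Cofork.IsColimit.desc hc s.inl (key s.inl s.inr s.condition)) ?_ ?_ ?_⟩⟩
  · intro s
    exact Cofork.IsColimit.π_desc' hc _ _
  · intro s
    have h : p₁ ≫ Cofork.IsColimit.desc hc s.inl (key s.inl s.inr s.condition) = s.inl :=
      Cofork.IsColimit.π_desc' hc _ _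
    rw [← cancel_epi p, ← reassoc_of% c₁, h, s.condition]
  · intro s m h₁ _
    rw [← cancel_epi p₁, h₁]
    exact (Cofork.IsColimit.π_desc' hc _ _).symm

theorem IsBinaryProduct.symm_aux {C : Type u} [Category.{v} C] {X A B : C}
    {f : X ⟶ A} {g : X ⟶ B} (h : IsBinaryProduct f g) : IsBinaryProduct g f :=
  h.elim fun h => ⟨BinaryFan.isLimitFlip h⟩

/-- In a regular category, any morphism of binary product diagrams whose vertical
morphisms are regular epimorphisms and whose central object has global support
consists of two pushout squares. -/
theorem regular_pushout_squares
    {C : Type u} [Category.{v} C] [HasFiniteLimits C] [IsRegularCategory C]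
    {X A₁ A₂ Y B₁ B₂ : C} (π₁ : X ⟶ A₁) (π₂ : X ⟶ A₂)
    (p₁ : A₁ ⟶ B₁) (p : X ⟶ Y) (p₂ : A₂ ⟶ B₂) (π₁' : Y ⟶ B₁) (π₂' : Y ⟶ B₂)
    (htop : IsBinaryProduct π₁ π₂) (hbot : IsBinaryProduct π₁' π₂')
    (hp₁ : IsRegularEpimorphism p₁) (hp : IsRegularEpimorphism p)
    (hp₂ : IsRegularEpimorphism p₂)
    (c₁ : π₁ ≫ p₁ = p ≫ π₁') (c₂ : π₂ ≫ p₂ = p ≫ π₂')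
    (hgs : HasGlobalSupport X) :
    IsPushout π₁ p p₁ π₁' ∧ IsPushout π₂ p p₂ π₂' := by
  exact ⟨pushout_square_aux π₁ π₂ p₁ p p₂ π₁' π₂' htop hbot hp₁ hp c₁ c₂ hgs,
    pushout_square_aux π₂ π₁ p₂ p p₁ π₂' π₁' htop.symm_aux hbot.symm_aux hp₂ hp c₂ c₁ hgs⟩
end

section
/- Let C be a complete regular category (a regular category with all small limits) and let X be an object with global support. If X has the finite strict refinement property, then X has the strict refinement property for arbitrary small families: for any small index types I and J and any two product diagrams (f_i : X → A_i)_{i∈I} and (g_j : X → B_j)_{j∈J}, there exist objects C_{i,j} and morphisms α_{i,j} : A_i → C_{i,j}, β_{i,j} : B_j → C_{i,j} with α_{i,j}∘f_i = β_{i,j}∘g_j for all i, j, such that for each i the family (α_{i,j})_{j∈J} is a product diagram and for each j the family (β_{i,j})_{i∈I} is a product diagram. -/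
open CategoryTheory CategoryTheory.Limits

universe v u

variable {C : Type u} [Category.{v} C]

/-- `X` has the finite strict refinement property. -/
def HasFiniteStrictRefinement {C : Type u} [Category.{v} C] (X : C) : Prop :=
  ∀ (I J : Type) (_ : Finite I) (_ : Finite J) (A : I → C) (B : J → C)
    (f : ∀ i, X ⟶ A i) (g : ∀ j, X ⟶ B j),
    Nonempty (IsLimit (Fan.mk X f)) → Nonempty (IsLimit (Fan.mk X g)) →
    ∃ (D : I → J → C) (α : ∀ i j, A i ⟶ D i j) (β : ∀ i j, B j ⟶ D i j),
      (∀ i j, f i ≫ α i j = g j ≫ β i j) ∧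
      (∀ i, Nonempty (IsLimit (Fan.mk (A i) (fun j => α i j)))) ∧
      (∀ j, Nonempty (IsLimit (Fan.mk (B j) (fun i => β i j))))

/-- A fan satisfying the elementwise universal property is a limit. -/
theorem aux_isLimit {C : Type u} [Category.{v} C] {ι : Type*} {X : C} {A : ι → C}
    (f : ∀ i, X ⟶ A i)
    (hex : ∀ (T : C) (a : ∀ i, T ⟶ A i), ∃ t : T ⟶ X, ∀ i, t ≫ f i = a i)
    (huniq : ∀ (T : C) (s t : T ⟶ X), (∀ i, s ≫ f i = t ≫ f i) → s = t) :
    Nonempty (IsLimit (Fan.mk X f)) := by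
  choose l hl using hex
  exact ⟨mkFanLimit _ (fun s => l _ s.proj) (fun s j => hl _ _ j)
    (fun s m hm => huniq _ _ _ (fun i => (hm i).trans (hl _ _ i).symm))⟩

theorem aux_exists {C : Type u} [Category.{v} C] {ι : Type*} {X : C} {A : ι → C}
    {f : ∀ i, X ⟶ A i} (h : Nonempty (IsLimit (Fan.mk X f)))
    {T : C} (a : ∀ i, T ⟶ A i) : ∃ t : T ⟶ X, ∀ i, t ≫ f i = a i := by
  obtain ⟨h⟩ := h
  exact ⟨h.lift (Fan.mk T a), fun i => h.fac (Fan.mk T a) ⟨i⟩⟩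

theorem aux_unique {C : Type u} [Category.{v} C] {ι : Type*} {X : C} {A : ι → C}
    {f : ∀ i, X ⟶ A i} (h : Nonempty (IsLimit (Fan.mk X f)))
    {T : C} (s t : T ⟶ X) (hst : ∀ i, s ≫ f i = t ≫ f i) : s = t := by
  obtain ⟨h⟩ := h
  exact h.hom_ext (fun ⟨i⟩ => hst i)

theorem aux_strongEpi {C : Type u} [Category.{v} C] {X Y : C} {f : X ⟶ Y}
    (h : IsRegularEpimorphism f) : StrongEpi f := by
  obtain ⟨W, a, b, w, ⟨hc⟩⟩ := h
  have : IsRegularEpi f := ⟨⟨{ W := W, left := a, right := b, w := w, isColimit := hc }⟩⟩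
  infer_instance

/-- Key lemma: the row `A ⟶ D j` is a product diagram. -/
theorem aux_key {C : Type u} [Category.{v} C] [HasLimits C] [IsRegularCategory C]
    (X : C) (hgs : HasGlobalSupport X) {J : Type v} {A A' : C} {B D D' : J → C}
    (f : X ⟶ A) (f' : X ⟶ A') (g : ∀ j, X ⟶ B j)
    (hf : ∀ (T : C) (a : T ⟶ A) (a' : T ⟶ A'), ∃ t : T ⟶ X, t ≫ f = a ∧ t ≫ f' = a')
    (hg : Nonempty (IsLimit (Fan.mk X g)))
    (α : ∀ j, A ⟶ D j) (α' : ∀ j, A' ⟶ D' j) (β : ∀ j, B j ⟶ D j) (β' : ∀ j, B j ⟶ D' j)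
    (h : ∀ j, f ≫ α j = g j ≫ β j) (h' : ∀ j, f' ≫ α' j = g j ≫ β' j)
    (hβ : ∀ j (T : C) (d : T ⟶ D j) (d' : T ⟶ D' j),
      ∃ t : T ⟶ B j, t ≫ β j = d ∧ t ≫ β' j = d')
    (hβu : ∀ j (T : C) (s t : T ⟶ B j), s ≫ β j = t ≫ β j → s ≫ β' j = t ≫ β' j → s = t) :
    Nonempty (IsLimit (Fan.mk A α)) := by
  have hsnd : ∀ T : C, StrongEpi (pullback.snd (terminal.from X) (terminal.from T)) :=
    fun T => aux_strongEpi (IsRegularCategory.regularEpi_stable _ _ hgs)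
  have huniq : ∀ (T : C) (s t : T ⟶ A), (∀ j, s ≫ α j = t ≫ α j) → s = t := by
    intro T s t hst
    have := hsnd T
    let p := pullback.fst (terminal.from X) (terminal.from T)
    let q := pullback.snd (terminal.from X) (terminal.from T)
    obtain ⟨x, hx, hx'⟩ := hf _ (q ≫ s) (p ≫ f')
    obtain ⟨y, hy, hy'⟩ := hf _ (q ≫ t) (p ≫ f')
    have hxy : x = y := by
      refine aux_unique hg _ _ (fun j => hβu j _ _ _ ?_ ?_)
      · rw [Category.assoc, Category.assoc, ← h, ← Category.assoc, hx, ← Category.assoc, hy,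
          Category.assoc, Category.assoc, hst]
      · rw [Category.assoc, Category.assoc, ← h', ← Category.assoc, hx', ← Category.assoc, hy']
    have hq : q ≫ s = q ≫ t := by rw [← hx, ← hy, hxy]
    exact (cancel_epi (pullback.snd (terminal.from X) (terminal.from T))).1 hq
  let φ : A ⟶ ∏ᶜ D := Pi.lift α
  have hφ : ∀ j, φ ≫ Pi.π D j = α j := fun j => by simp [φ]
  have hmono : Mono φ := ⟨fun s t hst => huniq _ _ _ (fun j => by
    rw [← hφ, ← Category.assoc, hst, Category.assoc])⟩
  have := hsnd (∏ᶜ D)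
  let p := pullback.fst (terminal.from X) (terminal.from (∏ᶜ D))
  let q := pullback.snd (terminal.from X) (terminal.from (∏ᶜ D))
  choose b hb hb' using fun j => hβ j _ (q ≫ Pi.π D j) (p ≫ g j ≫ β' j)
  obtain ⟨m, hm⟩ := aux_exists hg b
  have hfac : (m ≫ f) ≫ φ = q := by
    refine Pi.hom_ext _ _ (fun j => ?_)
    rw [Category.assoc, Category.assoc, hφ, h, ← Category.assoc, hm, hb]
  have hs : StrongEpi ((m ≫ f) ≫ φ) := by rw [hfac]; exact this
  have hs' : StrongEpi φ := strongEpi_of_strongEpi (m ≫ f) φ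
  have hiso : IsIso φ := isIso_of_mono_of_strongEpi φ
  refine aux_isLimit α (fun T a => ⟨Pi.lift a ≫ inv φ, fun j => ?_⟩) huniq
  rw [← hφ]; simp

/-- The complementary decomposition of one factor of a product diagram. -/
theorem aux_split {C : Type u} [Category.{v} C] [HasLimits C] {X : C} {I : Type v} {A : I → C}
    (f : ∀ i, X ⟶ A i) (hf : Nonempty (IsLimit (Fan.mk X f))) (i : I) :
    ∃ (A' : C) (f' : X ⟶ A'),
      (∀ (T : C) (a : T ⟶ A i) (a' : T ⟶ A'), ∃ t : T ⟶ X, t ≫ f i = a ∧ t ≫ f' = a') ∧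
      (∀ (T : C) (s t : T ⟶ X), s ≫ f i = t ≫ f i → s ≫ f' = t ≫ f' → s = t) := by
  classical
  refine ⟨∏ᶜ (fun k : {k : I // k ≠ i} => A k.1), Pi.lift (fun k => f k.1), ?_, ?_⟩
  · intro T a a'
    obtain ⟨t, ht⟩ := aux_exists hf (T := T) (fun k =>
      if hk : k = i then a ≫ eqToHom (by rw [hk])
      else a' ≫ Pi.π (fun k : {k : I // k ≠ i} => A k.1) ⟨k, hk⟩)
    refine ⟨t, by simp [ht], Pi.hom_ext _ _ ?_⟩
    rintro ⟨k, hk⟩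
    simp [ht, hk]
  · intro T s t h1 h2
    refine aux_unique hf _ _ (fun k => ?_)
    by_cases hk : k = i
    · subst hk; exact h1
    · have := congrArg (· ≫ Pi.π (fun k : {k : I // k ≠ i} => A k.1) ⟨k, hk⟩) h2
      simpa using this

/-- Binary refinement, in elementwise form. -/
theorem aux_binary {C : Type u} [Category.{v} C] {X : C} (hX : HasFiniteStrictRefinement X)
    {A A' B B' : C} (f : X ⟶ A) (f' : X ⟶ A') (g : X ⟶ B) (g' : X ⟶ B')
    (hf : ∀ (T : C) (a : T ⟶ A) (a' : T ⟶ A'), ∃ t : T ⟶ X, t ≫ f = a ∧ t ≫ f' = a')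
    (hfu : ∀ (T : C) (s t : T ⟶ X), s ≫ f = t ≫ f → s ≫ f' = t ≫ f' → s = t)
    (hg : ∀ (T : C) (a : T ⟶ B) (a' : T ⟶ B'), ∃ t : T ⟶ X, t ≫ g = a ∧ t ≫ g' = a')
    (hgu : ∀ (T : C) (s t : T ⟶ X), s ≫ g = t ≫ g → s ≫ g' = t ≫ g' → s = t) :
    ∃ (D E F : C) (α : A ⟶ D) (β : B ⟶ D) (αE : A' ⟶ E) (βE : B ⟶ E)
      (αF : A ⟶ F) (βF : B' ⟶ F),
      f ≫ α = g ≫ β ∧ f' ≫ αE = g ≫ βE ∧ f ≫ αF = g' ≫ βF ∧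
      (∀ (T : C) (d : T ⟶ D) (d' : T ⟶ E), ∃ t : T ⟶ B, t ≫ β = d ∧ t ≫ βE = d') ∧
      (∀ (T : C) (s t : T ⟶ B), s ≫ β = t ≫ β → s ≫ βE = t ≫ βE → s = t) ∧
      (∀ (T : C) (d : T ⟶ D) (d' : T ⟶ F), ∃ t : T ⟶ A, t ≫ α = d ∧ t ≫ αF = d') ∧
      (∀ (T : C) (s t : T ⟶ A), s ≫ α = t ≫ α → s ≫ αF = t ≫ αF → s = t) := by
  have mk : ∀ {Y Z Z' : C} (k : Y ⟶ Z) (k' : Y ⟶ Z')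
      (_ : ∀ (T : C) (a : T ⟶ Z) (a' : T ⟶ Z'), ∃ t : T ⟶ Y, t ≫ k = a ∧ t ≫ k' = a')
      (_ : ∀ (T : C) (s t : T ⟶ Y), s ≫ k = t ≫ k → s ≫ k' = t ≫ k' → s = t),
      Nonempty (IsLimit (Fan.mk (f := fun b : Bool => Bool.rec Z Z' b) Y
        (fun b => Bool.rec k k' b))) := by
    intro Y Z Z' k k' h1 h2
    refine aux_isLimit _ (fun T a => ?_) (fun T s t h => h2 T s t (h false) (h true))
    obtain ⟨t, ht, ht'⟩ := h1 T (a false) (a true)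
    exact ⟨t, fun b => by cases b; exacts [ht, ht']⟩
  obtain ⟨D, α, β, hc, hα, hβ⟩ := hX Bool Bool inferInstance inferInstance _ _ _ _
    (mk f f' hf hfu) (mk g g' hg hgu)
  refine ⟨D false false, D true false, D false true, α false false, β false false,
    α true false, β true false, α false true, β false true,
    hc false false, hc true false, hc false true, ?_, ?_, ?_, ?_⟩
  · intro T d d'
    obtain ⟨t, ht⟩ := aux_exists (hβ false) (T := T) (fun b => Bool.rec d d' b)
    exact ⟨t, ht false, ht true⟩
  · intro T s t h1 h2
    exact aux_unique (hβ false) s t (fun b => by cases b; exacts [h1, h2])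
  · intro T d d'
    obtain ⟨t, ht⟩ := aux_exists (hα false) (T := T) (fun b => Bool.rec d d' b)
    exact ⟨t, ht false, ht true⟩
  · intro T s t h1 h2
    exact aux_unique (hα false) s t (fun b => by cases b; exacts [h1, h2])

/-- In a complete regular category, an object with global support which has the
finite strict refinement property has the strict refinement property for arbitrary
small families. -/
theorem strictRefinement_of_finiteStrictRefinement
    {C : Type u} [Category.{v} C] [HasLimits C] [IsRegularCategory C]
    (X : C) (hgs : HasGlobalSupport X) (hX : HasFiniteStrictRefinement X) :
    ∀ (I J : Type v) (A : I → C) (B : J → C)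
      (f : ∀ i, X ⟶ A i) (g : ∀ j, X ⟶ B j),
      Nonempty (IsLimit (Fan.mk X f)) → Nonempty (IsLimit (Fan.mk X g)) →
      ∃ (D : I → J → C) (α : ∀ i j, A i ⟶ D i j) (β : ∀ i j, B j ⟶ D i j),
        (∀ i j, f i ≫ α i j = g j ≫ β i j) ∧
        (∀ i, Nonempty (IsLimit (Fan.mk (A i) (fun j => α i j)))) ∧
        (∀ j, Nonempty (IsLimit (Fan.mk (B j) (fun i => β i j)))) := by
  intro I J A B f g hf hg
  choose A' f' hf1 hf2 using aux_split f hf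
  choose B' g' hg1 hg2 using aux_split g hg
  choose D E F α β αE βE αF βF h hE hF h1 h2 h3 h4 using fun i j =>
    aux_binary hX (f i) (f' i) (g j) (g' j) (hf1 i) (hf2 i) (hg1 j) (hg2 j)
  refine ⟨D, α, β, h, fun i => ?_, fun j => ?_⟩
  · exact aux_key X hgs (f i) (f' i) g (hf1 i) hg (α i) (αE i) (β i) (βE i) (h i) (hE i)
      (h1 i) (h2 i)
  · exact aux_key X hgs (g j) (g' j) f (hg1 j) hf (fun i => β i j) (fun i => βF i j)
      (fun i => α i j) (fun i => αF i j) (fun i => (h i j).symm) (fun i => (hF i j).symm)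
      (fun i => h3 i j) (fun i => h4 i j)
end
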